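/- Let X ∈ ℝ^{N×T} be a matrix of rank r < min{N,T} admitting a thin SVD X = UΣVᵀ in which the left factor U ∈ ℝ^{N×r} satisfies ‖U‖_{2,∞} ≤ √(μ₁ r / N) for some constant μ₁ ≥ 1. Fix δ ∈ (0,1) and ε ∈ (0,1), and let m be an integer with m ≥ 3 r μ₁ ln(2r/δ)/ε². If I is a subset of {1,…,N} of size m chosen uniformly at random among all size-m subsets (uniform sampling without replacement), then the row submatrix X(I,:) (the matrix formed by the rows of X indexed by I) has rank r with probability at least 1 − δ. -/

import Mathlib

open Matrix
open scoped Classical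

/-- The `(2,∞)`-norm of a matrix: the maximum Euclidean norm of a row. -/
noncomputable def rowNorm2Inf {m n : Type*} [Fintype m] [Fintype n] (A : Matrix m n ℝ) : ℝ :=
  ⨆ i, Real.sqrt (∑ j, A i j ^ 2)

/-- `IsThinSVD X r U S V` : `X = U S Vᵀ` is a thin singular value decomposition of the
rank-`r` matrix `X`, i.e. `U` and `V` have orthonormal columns and `S` is diagonal with
positive non-increasing diagonal entries (the nonzero singular values of `X`). -/
def IsThinSVD {m n : Type*} [Fintype m] [Fintype n] (X : Matrix m n ℝ) (r : ℕ)
    (U : Matrix m (Fin r) ℝ) (S : Matrix (Fin r) (Fin r) ℝ) (V : Matrix n (Fin r) ℝ) : Prop :=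
  X = U * S * Vᵀ ∧ Uᵀ * U = 1 ∧ Vᵀ * V = 1 ∧ S.IsDiag ∧
    (∀ i, 0 < S i i) ∧ ∀ i j : Fin r, i ≤ j → S j j ≤ S i i

namespace RowSamp

/-- Row `i` of `U` as a Euclidean vector. -/
noncomputable def row {N r : ℕ} (U : Matrix (Fin N) (Fin r) ℝ) (i : Fin N) :
    EuclideanSpace ℝ (Fin r) := WithLp.toLp 2 (U i)

/-- Span of the rows indexed by `I`. -/
noncomputable def W {N r : ℕ} (U : Matrix (Fin N) (Fin r) ℝ) (I : Finset (Fin N)) :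
    Submodule ℝ (EuclideanSpace ℝ (Fin r)) := Submodule.span ℝ (row U '' (I : Set (Fin N)))

/-- Codimension of the row span. -/
noncomputable def d {N r : ℕ} (U : Matrix (Fin N) (Fin r) ℝ) (I : Finset (Fin N)) : ℝ :=
  (r : ℝ) - (Module.finrank ℝ (W U I) : ℝ)

lemma d_eq {N r : ℕ} (U : Matrix (Fin N) (Fin r) ℝ) (I : Finset (Fin N)) :
    d U I = (Module.finrank ℝ (W U I)ᗮ : ℝ) := by
  have h := Submodule.finrank_add_finrank_orthogonal (W U I)
  rw [finrank_euclideanSpace_fin] at h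
  have h' : ((Module.finrank ℝ (W U I) : ℝ) + (Module.finrank ℝ (W U I)ᗮ : ℝ)) = r := by
    exact_mod_cast h
  unfold d; linarith

lemma d_insert {N r : ℕ} (U : Matrix (Fin N) (Fin r) ℝ) (I : Finset (Fin N)) (i : Fin N) :
    d U (insert i I) ≤ d U I - (if row U i ∈ W U I then 0 else 1) := by
  have hle : W U I ≤ W U (insert i I) := by
    unfold W; apply Submodule.span_mono; apply Set.image_mono; simp
  have hi : row U i ∈ W U (insert i I) := by
    apply Submodule.subset_span; exact ⟨i, by simp, rfl⟩
  split_ifs with h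
  · have := Submodule.finrank_mono hle
    have h2 : (Module.finrank ℝ (W U I) : ℝ) ≤ Module.finrank ℝ (W U (insert i I)) := by
      exact_mod_cast this
    unfold d; linarith
  · have hlt : W U I < W U (insert i I) := by
      refine lt_of_le_of_ne hle ?_
      intro he; rw [← he] at hi; exact h hi
    have := Submodule.finrank_lt_finrank_of_lt hlt
    have h2 : (Module.finrank ℝ (W U I) : ℝ) + 1 ≤ Module.finrank ℝ (W U (insert i I)) := by
      exact_mod_cast this
    unfold d; linarith

lemma sum_inner_sq {N r : ℕ} (U : Matrix (Fin N) (Fin r) ℝ) (hUU : Uᵀ * U = 1)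
    (e : EuclideanSpace ℝ (Fin r)) :
    ∑ i, (inner ℝ e (row U i)) ^ 2 = ‖e‖ ^ 2 := by
  have h1 : ∀ i, inner ℝ e (row U i) = (U *ᵥ e.ofLp) i := by
    intro i
    simp [row, PiLp.inner_apply, Matrix.mulVec, dotProduct]
  have h2 : ∑ i, (inner ℝ e (row U i)) ^ 2 = (U *ᵥ e.ofLp) ⬝ᵥ (U *ᵥ e.ofLp) := by
    simp only [h1, dotProduct, sq]
  rw [h2, Matrix.dotProduct_mulVec, ← Matrix.mulVec_transpose, Matrix.mulVec_mulVec, hUU,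
    Matrix.one_mulVec, EuclideanSpace.norm_sq_eq]
  simp [dotProduct, sq]

lemma d_le_count {N r : ℕ} (U : Matrix (Fin N) (Fin r) ℝ) (hUU : Uᵀ * U = 1)
    (B : ℝ) (hB : ∀ i, ‖row U i‖ ^ 2 ≤ B) (I : Finset (Fin N)) :
    d U I ≤ (∑ i, if row U i ∈ W U I then (0:ℝ) else 1) * B := by
  let b := stdOrthonormalBasis ℝ (W U I)ᗮ
  let e : Fin (Module.finrank ℝ (W U I)ᗮ) → EuclideanSpace ℝ (Fin r) := fun j => (b j : _)
  have he : Orthonormal ℝ e :=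
    b.orthonormal.comp_linearIsometry (Submodule.subtypeₗᵢ (W U I)ᗮ)
  have h1 : d U I = ∑ i, ∑ j, (inner ℝ (e j) (row U i)) ^ 2 := by
    rw [Finset.sum_comm]
    simp only [sum_inner_sq U hUU, he.1]
    simp [d_eq]
  rw [h1, Finset.sum_mul]
  apply Finset.sum_le_sum
  intro i _
  split_ifs with h
  · rw [zero_mul]
    apply le_of_eq
    apply Finset.sum_eq_zero
    intro j _
    have : inner ℝ (e j) (row U i) = 0 :=
      Submodule.inner_left_of_mem_orthogonal h (b j).2
    simp [this]
  · rw [one_mul]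
    refine le_trans ?_ (hB i)
    have := he.sum_inner_products_le (row U i) (s := Finset.univ)
    simpa using this

lemma double_count {N : ℕ} (f : Finset (Fin N) → ℝ) (m : ℕ) :
    ((m:ℝ) + 1) * ∑ J ∈ Finset.powersetCard (m+1) (Finset.univ : Finset (Fin N)), f J =
    ∑ I ∈ Finset.powersetCard m (Finset.univ : Finset (Fin N)), ∑ i ∈ Iᶜ, f (insert i I) := by
  have h1 : ((m:ℝ) + 1) * ∑ J ∈ Finset.powersetCard (m+1) (Finset.univ : Finset (Fin N)), f J =
      ∑ J ∈ Finset.powersetCard (m+1) (Finset.univ : Finset (Fin N)), ∑ i ∈ J, f J := by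
    rw [Finset.mul_sum]
    apply Finset.sum_congr rfl
    intro J hJ
    rw [Finset.mem_powersetCard] at hJ
    simp [hJ.2]
  rw [h1, Finset.sum_sigma', Finset.sum_sigma']
  refine Finset.sum_bij' (fun x _ => ⟨x.1.erase x.2, x.2⟩) (fun x _ => ⟨insert x.2 x.1, x.2⟩)
    ?_ ?_ ?_ ?_ ?_
  · rintro ⟨J, i⟩ h
    simp only [Finset.mem_sigma, Finset.mem_powersetCard] at h ⊢
    simp [Finset.card_erase_of_mem h.2, h.1.2]
  · rintro ⟨I, i⟩ h
    simp only [Finset.mem_sigma, Finset.mem_powersetCard, Finset.mem_compl] at h ⊢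
    simp [Finset.card_insert_of_notMem h.2, h.1.2]
  · rintro ⟨J, i⟩ h
    simp only [Finset.mem_sigma] at h
    simp [Finset.insert_erase h.2]
  · rintro ⟨I, i⟩ h
    simp only [Finset.mem_sigma, Finset.mem_compl] at h
    simp [Finset.erase_insert h.2]
  · rintro ⟨J, i⟩ h
    simp only [Finset.mem_sigma] at h
    simp [Finset.insert_erase h.2]

lemma step {N r : ℕ} (U : Matrix (Fin N) (Fin r) ℝ) (c : ℝ) (hc : 0 ≤ c)
    (hcount : ∀ I, N * c * d U I ≤ ∑ i, if row U i ∈ W U I then (0:ℝ) else 1)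
    (m : ℕ) (hm : m ≤ N) :
    ((m:ℝ) + 1) * ∑ J ∈ Finset.powersetCard (m+1) (Finset.univ : Finset (Fin N)), d U J ≤
    ((N:ℝ) - m) * (1 - c) * ∑ I ∈ Finset.powersetCard m (Finset.univ : Finset (Fin N)), d U I := by
  rw [double_count, Finset.mul_sum]
  apply Finset.sum_le_sum
  intro I hI
  rw [Finset.mem_powersetCard] at hI
  have hd : 0 ≤ d U I := by rw [d_eq]; positivity
  have hcard : ((Iᶜ.card : ℕ) : ℝ) = N - m := by
    rw [Finset.card_compl, hI.2, Fintype.card_fin, Nat.cast_sub hm]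
  have hsum : ∑ i ∈ Iᶜ, (if row U i ∈ W U I then (0:ℝ) else 1) =
      ∑ i, if row U i ∈ W U I then (0:ℝ) else 1 := by
    apply Finset.sum_subset (Finset.subset_univ _)
    intro i _ hi
    rw [Finset.mem_compl, not_not] at hi
    rw [if_pos]
    exact Submodule.subset_span ⟨i, hi, rfl⟩
  calc ∑ i ∈ Iᶜ, d U (insert i I)
      ≤ ∑ i ∈ Iᶜ, (d U I - (if row U i ∈ W U I then 0 else 1)) :=
        Finset.sum_le_sum fun i _ => d_insert U I i
    _ = ((N:ℝ) - m) * d U I - ∑ i, (if row U i ∈ W U I then (0:ℝ) else 1) := by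
        rw [Finset.sum_sub_distrib, hsum, Finset.sum_const, nsmul_eq_mul, hcard]
    _ ≤ ((N:ℝ) - m) * d U I - N * c * d U I := by linarith [hcount I]
    _ ≤ _ := by
        have : 0 ≤ (m:ℝ) * (c * d U I) := by positivity
        nlinarith

lemma sum_bound {N r : ℕ} (U : Matrix (Fin N) (Fin r) ℝ) (c : ℝ) (hc : 0 ≤ c) (hc1 : c ≤ 1)
    (hcount : ∀ I, N * c * d U I ≤ ∑ i, if row U i ∈ W U I then (0:ℝ) else 1)
    (m : ℕ) (hm : m ≤ N) :
    ∑ J ∈ Finset.powersetCard m (Finset.univ : Finset (Fin N)), d U J ≤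
      (N.choose m : ℝ) * (r * (1 - c) ^ m) := by
  induction m with
  | zero =>
    have : d U ∅ ≤ r := by unfold d; simp
    simpa using this
  | succ m ih =>
    have hm' : m ≤ N := by omega
    have h1 := step U c hc hcount m hm'
    have h2 : ((N.choose (m+1) : ℕ) : ℝ) * ((m:ℝ) + 1) = (N.choose m : ℝ) * ((N:ℝ) - m) := by
      have := Nat.choose_succ_right_eq N m
      rw [← Nat.cast_sub hm']
      exact_mod_cast this
    have h3 : 0 ≤ ((N:ℝ) - m) * (1 - c) := by
      have : (m:ℝ) ≤ N := by exact_mod_cast hm'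
      apply mul_nonneg <;> linarith
    have h4 := mul_le_mul_of_nonneg_left (ih hm') h3
    have h5 : (0:ℝ) < (m:ℝ) + 1 := by positivity
    refine le_of_mul_le_mul_left ?_ h5
    calc _ ≤ _ := h1
      _ ≤ _ := h4
      _ = (N.choose m : ℝ) * ((N:ℝ) - m) * (r * (1 - c) ^ (m+1)) := by ring
      _ = _ := by rw [← h2]; ring

lemma rank_of_d {N T r : ℕ} (X : Matrix (Fin N) (Fin T) ℝ)
    (U : Matrix (Fin N) (Fin r) ℝ) (S : Matrix (Fin r) (Fin r) ℝ)
    (V : Matrix (Fin T) (Fin r) ℝ) (hsvd : IsThinSVD X r U S V) (I : Finset (Fin N))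
    (hd : d U I < 1) :
    (X.submatrix (fun i : ↥I => (i : Fin N)) id).rank = r := by
  obtain ⟨hX, hUU, hVV, hS, hpos, -⟩ := hsvd
  have hsub : X.submatrix (fun i : ↥I => (i : Fin N)) id =
      U.submatrix (fun i : ↥I => (i : Fin N)) id * (S * Vᵀ) := by
    rw [hX, Matrix.mul_assoc]; rfl
  have hSS : S * Matrix.diagonal (fun i => (S i i)⁻¹) = 1 := by
    have h0 : S = Matrix.diagonal (fun i => S i i) := hS.diagonal_diag.symm
    have h1 : Matrix.diagonal (fun i => S i i) * Matrix.diagonal (fun i => (S i i)⁻¹) = 1 := by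
      rw [Matrix.diagonal_mul_diagonal, ← Matrix.diagonal_one]
      congr 1; funext i
      exact mul_inv_cancel₀ (hpos i).ne'
    rwa [← h0] at h1
  have hU : U.submatrix (fun i : ↥I => (i : Fin N)) id =
      X.submatrix (fun i : ↥I => (i : Fin N)) id *
        (V * Matrix.diagonal (fun i => (S i i)⁻¹)) := by
    rw [hsub, Matrix.mul_assoc, Matrix.mul_assoc, ← Matrix.mul_assoc Vᵀ, hVV, Matrix.one_mul,
      hSS, Matrix.mul_one]
  have h1 : (U.submatrix (fun i : ↥I => (i : Fin N)) id).rank ≤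
      (X.submatrix (fun i : ↥I => (i : Fin N)) id).rank := by
    conv_lhs => rw [hU]
    exact Matrix.rank_mul_le_left _ _
  have h2 : (X.submatrix (fun i : ↥I => (i : Fin N)) id).rank ≤
      (U.submatrix (fun i : ↥I => (i : Fin N)) id).rank := by
    rw [hsub]; exact Matrix.rank_mul_le_left _ _
  have h3 : (U.submatrix (fun i : ↥I => (i : Fin N)) id).rank ≤ r := by
    simpa using Matrix.rank_le_card_width (U.submatrix (fun i : ↥I => (i : Fin N)) id)
  have h4 : (U.submatrix (fun i : ↥I => (i : Fin N)) id).rank = Module.finrank ℝ (W U I) := by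
    rw [Matrix.rank_eq_finrank_span_row]
    have : W U I = (Submodule.span ℝ (Set.range
        (U.submatrix (fun i : ↥I => (i : Fin N)) id).row)).map
          (WithLp.linearEquiv 2 ℝ (Fin r → ℝ)).symm.toLinearMap := by
      rw [Submodule.map_span]
      unfold W
      congr 1
      ext x
      simp only [Set.mem_image, Set.mem_range]
      constructor
      · rintro ⟨i, hi, rfl⟩
        exact ⟨_, ⟨⟨i, hi⟩, rfl⟩, rfl⟩
      · rintro ⟨_, ⟨⟨i, hi⟩, rfl⟩, rfl⟩
        exact ⟨i, hi, rfl⟩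
    rw [this]
    exact (LinearEquiv.finrank_map_eq _ _).symm
  have h5 : (r : ℝ) < (Module.finrank ℝ (W U I) : ℝ) + 1 := by unfold d at hd; linarith
  have h6 : r < Module.finrank ℝ (W U I) + 1 := by exact_mod_cast h5
  omega

end RowSamp

/-- if `X ∈ ℝ^{N×T}` has rank `r < min{N,T}`, a thin SVD `X = UΣVᵀ` with
`‖U‖_{2,∞} ≤ √(μ₁ r / N)` for some `μ₁ ≥ 1`, and `I` is a uniformly random subset of
`{1,…,N}` of size `m ≥ 3 r μ₁ ln(2r/δ)/ε²`, then `rank X(I,:) = r` with probability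
at least `1 - δ`. -/
theorem stmt0 {N T r : ℕ} (X : Matrix (Fin N) (Fin T) ℝ)
    (hrank : X.rank = r) (hr : r < min N T)
    (U : Matrix (Fin N) (Fin r) ℝ) (S : Matrix (Fin r) (Fin r) ℝ)
    (V : Matrix (Fin T) (Fin r) ℝ) (hsvd : IsThinSVD X r U S V)
    (μ₁ : ℝ) (hμ₁ : 1 ≤ μ₁) (hU : rowNorm2Inf U ≤ Real.sqrt (μ₁ * r / N))
    (δ ε : ℝ) (hδ0 : 0 < δ) (hδ1 : δ < 1) (hε0 : 0 < ε) (hε1 : ε < 1)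
    (m : ℕ) (hmN : m ≤ N)
    (hm : 3 * r * μ₁ * Real.log (2 * r / δ) / ε ^ 2 ≤ (m : ℝ)) :
    1 - δ ≤
      (((Finset.powersetCard m (Finset.univ : Finset (Fin N))).filter
          (fun I : Finset (Fin N) =>
            (X.submatrix (fun i : ↥I => (i : Fin N)) id).rank = r)).card : ℝ) /
        ((Finset.powersetCard m (Finset.univ : Finset (Fin N))).card : ℝ) := by
  have hUU := hsvd.2.1
  have hN : 0 < N := by omega
  have hNr : (0:ℝ) < N := by exact_mod_cast hN
  have hB : ∀ i, ‖RowSamp.row U i‖ ^ 2 ≤ μ₁ * r / N := by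
    intro i
    have h0 : 0 ≤ μ₁ * r / N := by positivity
    have h1 : ‖RowSamp.row U i‖ ≤ Real.sqrt (μ₁ * r / N) := by
      refine le_trans ?_ hU
      have : ‖RowSamp.row U i‖ = Real.sqrt (∑ j, U i j ^ 2) := by
        rw [EuclideanSpace.norm_eq]; simp [RowSamp.row]
      rw [this]
      exact le_ciSup (f := fun i => Real.sqrt (∑ j, U i j ^ 2)) (Set.finite_range _).bddAbove i
    calc _ ≤ Real.sqrt (μ₁ * r / N) ^ 2 := by gcongr
      _ = _ := Real.sq_sqrt h0
  have key : ∃ c : ℝ, 0 ≤ c ∧ c ≤ 1 ∧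
      (∀ I, N * c * RowSamp.d U I ≤ ∑ i, if RowSamp.row U i ∈ RowSamp.W U I then (0:ℝ) else 1) ∧
      r * (1 - c) ^ m ≤ δ := by
    rcases Nat.eq_zero_or_pos r with h0 | h0
    · refine ⟨0, le_rfl, zero_le_one, ?_, ?_⟩
      · intro I
        rw [mul_zero, zero_mul]
        exact Finset.sum_nonneg fun i _ => by split_ifs <;> norm_num
      · simp [h0, hδ0.le]
    · have hr1 : (1:ℝ) ≤ r := by exact_mod_cast h0
      have hμr : 1 ≤ μ₁ * r := by nlinarith
      have hμp : 0 < μ₁ * r := by linarith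
      refine ⟨(μ₁ * r)⁻¹, by positivity, inv_le_one_of_one_le₀ hμr, ?_, ?_⟩
      · intro I
        have h := RowSamp.d_le_count U hUU _ hB I
        set q := ∑ i, if RowSamp.row U i ∈ RowSamp.W U I then (0:ℝ) else 1
        calc N * (μ₁ * r)⁻¹ * RowSamp.d U I ≤ N * (μ₁ * r)⁻¹ * (q * (μ₁ * r / N)) := by gcongr
          _ = q := by field_simp
      · have hx : 1 < 2 * r / δ := by rw [lt_div_iff₀ hδ0]; linarith
        have hL : 0 < Real.log (2 * r / δ) := Real.log_pos hx
        have hm1 : μ₁ * r * Real.log (2 * r / δ) ≤ m := by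
          refine le_trans ?_ hm
          rw [le_div_iff₀ (by positivity)]
          have he : ε ^ 2 ≤ 1 := by nlinarith
          have hp : 0 < μ₁ * r * Real.log (2 * r / δ) := by positivity
          nlinarith
        have hm2 : Real.log (2 * r / δ) ≤ m * (μ₁ * r)⁻¹ := by
          rw [← div_eq_mul_inv, le_div_iff₀ hμp]; linarith
        have hc1 : (μ₁ * r)⁻¹ ≤ 1 := inv_le_one_of_one_le₀ hμr
        calc r * (1 - (μ₁ * r)⁻¹) ^ m ≤ r * (Real.exp (-(μ₁ * r)⁻¹)) ^ m := by
              gcongr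
              · exact Real.one_sub_le_exp_neg _
          _ = r * Real.exp (-(m * (μ₁ * r)⁻¹)) := by rw [← Real.exp_nat_mul]; ring_nf
          _ ≤ r * Real.exp (-Real.log (2 * r / δ)) := by gcongr
          _ = δ / 2 := by
              rw [Real.exp_neg, Real.exp_log (by linarith)]
              field_simp
          _ ≤ δ := by linarith
  obtain ⟨c, hc0, hc1, hcount, hfin⟩ := key
  have hsum := RowSamp.sum_bound U c hc0 hc1 hcount m hmN
  set P := Finset.powersetCard m (Finset.univ : Finset (Fin N)) with hP
  have hcard : (P.card : ℝ) = N.choose m := by simp [hP]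
  have hpos : (0:ℝ) < P.card := by
    rw [hcard]; exact_mod_cast Nat.choose_pos hmN
  set p : Finset (Fin N) → Prop := fun I =>
    (X.submatrix (fun i : ↥I => (i : Fin N)) id).rank = r with hp
  have hsplit : ((P.filter p).card : ℝ) + ((P.filter (fun I => ¬ p I)).card : ℝ) = P.card := by
    exact_mod_cast Finset.card_filter_add_card_filter_not (s := P) p
  have hbad : ((P.filter (fun I => ¬ p I)).card : ℝ) ≤ ∑ J ∈ P, RowSamp.d U J := by
    rw [Finset.card_filter]
    push_cast
    apply Finset.sum_le_sum
    intro I _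
    split_ifs with h
    · rw [RowSamp.d_eq]; positivity
    · by_contra hlt
      exact h (RowSamp.rank_of_d X U S V hsvd I (not_le.mp hlt))
  rw [le_div_iff₀ hpos]
  have : (N.choose m : ℝ) * (r * (1 - c) ^ m) ≤ P.card * δ := by
    rw [hcard]; gcongr
  linarith
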